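/- Let φ(x,t) = t^p + a(x) t^q with 1 < p < q < ∞, a a nonnegative function in C^{0,α}(ℝⁿ) for some α ∈ (0,1], and assume q/p ≤ 1 + α/n. Let Ω ⊆ ℝⁿ be open and 0 < r_o ≤ 1. Fix a sign choice: let a*_{y,R} denote either a^+_{y,R} or a^-_{y,R}, used consistently, with φ*_{y,R}(t) = t^p + a*_{y,R} t^q. Suppose there is c₀ > 0 such that for every z ∈ ℝⁿ∖Ω, y ∈ ℝⁿ, 0 < r < r_o, R > 0 and u ∈ Lip_0(Ω): ⨍_{B(z,r)} φ*_{y,R}(|u|) dx ≤ c₀ · (1 + a*_{y,R} ((⨍_{B(z,r)} |r∇u|^p)^{1/p})^{q−p}) · ⨍_{B(z,r)} |r∇u|^p dx. Then there is a constant c = c(n,p,q,c₀) such that for every z ∈ Ω with r_z := dist(z,∂Ω) < r_o, every y ∈ ℝⁿ, R > 0 and u ∈ Lip_0(Ω): φ*_{y,R}(|(u)_{B(z,r_z)}|) ≤ c · (1 + a*_{y,R} ((⨍_{B(z,2r_z)} |r_z ∇u|^p)^{1/p})^{q−p}) · ⨍_{B(z,2r_z)} |r_z ∇u|^p dx. 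-/

import Mathlib

open MeasureTheory Metric Set

noncomputable section

/-- Euclidean space `ℝⁿ`. -/
abbrev En (n : ℕ) : Type := EuclideanSpace ℝ (Fin n)

/-- Norm of the (a.e. defined, by Rademacher's theorem) gradient of `u` at `x`. -/
def gnorm {n : ℕ} (u : En n → ℝ) (x : En n) : ℝ := ‖fderiv ℝ u x‖

/-- Admissible test functions for the level-`t` capacity of `E` in `O`:
Lipschitz on the closure of `O`, `u ≥ t` on `E`, `u = 0` on `∂O`. -/
def Adm {n : ℕ} (E O : Set (En n)) (t : ℝ) : Set (En n → ℝ) :=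
  {u | (∃ K, LipschitzOnWith K u (closure O)) ∧ (∀ x ∈ E, t ≤ u x) ∧
    ∀ x ∈ frontier O, u x = 0}

/-- Level-`t` variational capacity with integrand `ψ` and normalization `ψm`. -/
def capLevel {n : ℕ} (ψ : En n → ℝ → ℝ) (ψm : ℝ → ℝ)
    (E O : Set (En n)) (t : ℝ) : ℝ :=
  sInf ((fun u => ∫ x in O, ψ x (gnorm u x) / ψm t) '' Adm E O t)

/-- Infimal capacity with integrand `ψ` and normalization `ψm`. -/
def capInfGen {n : ℕ} (ψ : En n → ℝ → ℝ) (ψm : ℝ → ℝ) (E O : Set (En n)) : ℝ :=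
  ⨅ t : Ioi (0 : ℝ), capLevel ψ ψm E O (t : ℝ)

/-- The double-phase integrand `φ(x,t) = t^p + a(x) t^q`. -/
def phi {n : ℕ} (a : En n → ℝ) (p q : ℝ) (x : En n) (t : ℝ) : ℝ :=
  t ^ p + a x * t ^ q

/-- `a_O^- = inf_{x ∈ O} a(x)`. -/
def aInfOn {n : ℕ} (a : En n → ℝ) (O : Set (En n)) : ℝ := sInf (a '' O)

/-- `a_O^+ = sup_{x ∈ O} a(x)`. -/
def aSupOn {n : ℕ} (a : En n → ℝ) (O : Set (En n)) : ℝ := sSup (a '' O)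

/-- `φ_O^-(t) = t^p + a_O^- t^q`. -/
def phiMinus {n : ℕ} (a : En n → ℝ) (p q : ℝ) (O : Set (En n)) (t : ℝ) : ℝ :=
  t ^ p + aInfOn a O * t ^ q

/-- Level-`t` variational capacity for the double-phase integrand. -/
def capPhiLevel {n : ℕ} (a : En n → ℝ) (p q t : ℝ) (E O : Set (En n)) : ℝ :=
  capLevel (phi a p q) (phiMinus a p q O) E O t

/-- Infimal `φ`-capacity. -/
def capPhiInf {n : ℕ} (a : En n → ℝ) (p q : ℝ) (E O : Set (En n)) : ℝ :=
  ⨅ t : Ioi (0 : ℝ), capPhiLevel a p q (t : ℝ) E O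

/-- Variational `p`-capacity. -/
def capP {n : ℕ} (p : ℝ) (E O : Set (En n)) : ℝ :=
  sInf ((fun u => ∫ x in O, gnorm u x ^ p) '' Adm E O 1)

/-- The rescaled set `{x ∈ B̄(0,1/2) : z + r x ∈ E}`. -/
def shiftedSet {n : ℕ} (E : Set (En n)) (z : En n) (r : ℝ) : Set (En n) :=
  {x ∈ closedBall (0 : En n) (1 / 2) | z + r • x ∈ E}

/-- Local uniform infimal `φ`-fatness with parameters `cfat` and `ro`. -/
def LocUnifPhiFat {n : ℕ} (a : En n → ℝ) (p q : ℝ) (E : Set (En n))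
    (cfat ro : ℝ) : Prop :=
  ∀ z ∈ E, ∀ r : ℝ, 0 < r → r < ro →
    cfat ≤ capPhiInf (fun x => a (z + r • x)) p q (shiftedSet E z r) (ball (0 : En n) 1)

/-- Local uniform `p`-fatness with parameters `cfat` and `ro`. -/
def LocUnifPFat {n : ℕ} (p : ℝ) (E : Set (En n)) (cfat ro : ℝ) : Prop :=
  ∀ z ∈ E, ∀ r : ℝ, 0 < r → r < ro →
    cfat ≤ capP p (shiftedSet E z r) (ball (0 : En n) 1)

/-- `Lip_0(Ω)`: Lipschitz functions with compact support contained in `Ω`,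
extended by zero to `ℝⁿ`. -/
def Lip0 {n : ℕ} (Ω : Set (En n)) : Set (En n → ℝ) :=
  {u | (∃ K, LipschitzWith K u) ∧ HasCompactSupport u ∧ tsupport u ⊆ Ω}

/-- Restricted centered maximal operator `M_R f(x) = sup_{0<r<R} ⨍_{B(x,r)} |f|`. -/
def maxOp {n : ℕ} (R : ℝ) (f : En n → ℝ) (x : En n) : ℝ :=
  ⨆ r : Ioo (0 : ℝ) R, ⨍ y in ball x (r : ℝ), |f y|

/-!
Let `w` be a boundary point nearest to `z` and `r = dist z w`. Moving the ball `B(w,r)` to `B(z,r)`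
along the segment `[w,z]` stays inside `B(z,2r)`, and the derivative of the mean of `u` along this
motion is controlled by `∇u`; hence the means over the two balls differ by at most `2^n N`, where
`N` is the `L^p` mean of `r|∇u|` on `B(z,2r)`. Since `(1 + b N^{q-p}) N^p = N^p + b N^q`, both
right-hand sides are values of the double-phase function `t^p + b t^q` itself. Jensen's inequality
on `B(w,r)`, convexity of this function and its growth under dilations turn the boundary inequality
at `w` into the one at `z`.
-/

section DoublePhase

/-- The double-phase integrand with constant coefficient `b`; the paper's `φ*_{y,R}` is the case
`b = a*_{y,R}`. -/
def doublePhase (p q b t : ℝ) : ℝ := t ^ p + b * t ^ q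

variable {p q b : ℝ}

lemma continuous_doublePhase (hp : 0 ≤ p) (hq : 0 ≤ q) : Continuous (doublePhase p q b) :=
  (Real.continuous_rpow_const hp).add (continuous_const.mul (Real.continuous_rpow_const hq))

lemma convexOn_doublePhase (hp : 1 ≤ p) (hq : 1 ≤ q) (hb : 0 ≤ b) :
    ConvexOn ℝ (Ici 0) (doublePhase p q b) :=
  (convexOn_rpow hp).add ((convexOn_rpow hq).smul hb)

lemma monotoneOn_doublePhase (hp : 0 ≤ p) (hq : 0 ≤ q) (hb : 0 ≤ b) :
    MonotoneOn (doublePhase p q b) (Ici 0) := by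
  intro s hs t _ hst
  exact add_le_add (Real.rpow_le_rpow hs hst hp)
    (mul_le_mul_of_nonneg_left (Real.rpow_le_rpow hs hst hq) hb)

lemma doublePhase_mul_le {k t : ℝ} (hpq : p ≤ q) (hk : 1 ≤ k) (ht : 0 ≤ t) :
    doublePhase p q b (k * t) ≤ k ^ q * doublePhase p q b t := by
  have hk0 : 0 ≤ k := zero_le_one.trans hk
  calc doublePhase p q b (k * t) = k ^ p * t ^ p + b * (k ^ q * t ^ q) := by
        rw [doublePhase, Real.mul_rpow hk0 ht, Real.mul_rpow hk0 ht]
    _ ≤ k ^ q * t ^ p + b * (k ^ q * t ^ q) := by gcongr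
    _ = k ^ q * doublePhase p q b t := by rw [doublePhase]; ring

lemma doublePhase_add_le {s t : ℝ} (hp : 1 ≤ p) (hpq : p ≤ q) (hb : 0 ≤ b) (hs : 0 ≤ s)
    (ht : 0 ≤ t) :
    doublePhase p q b (s + t) ≤ 2 ^ (q - 1) * (doublePhase p q b s + doublePhase p q b t) := by
  have hmid : doublePhase p q b (1 / 2 * s + 1 / 2 * t) ≤
      1 / 2 * doublePhase p q b s + 1 / 2 * doublePhase p q b t :=
    (convexOn_doublePhase hp (hp.trans hpq) hb).2 hs ht (by norm_num) (by norm_num) (by norm_num)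
  calc doublePhase p q b (s + t) = doublePhase p q b (2 * (1 / 2 * s + 1 / 2 * t)) := by ring_nf
    _ ≤ 2 ^ q * doublePhase p q b (1 / 2 * s + 1 / 2 * t) :=
        doublePhase_mul_le hpq one_le_two (by positivity)
    _ ≤ 2 ^ q * (1 / 2 * doublePhase p q b s + 1 / 2 * doublePhase p q b t) := by gcongr
    _ = 2 ^ (q - 1) * (doublePhase p q b s + doublePhase p q b t) := by
        rw [Real.rpow_sub_one two_ne_zero]
        ring

lemma doublePhase_rpow_one_div {g : ℝ} (hp : 0 < p) (hpq : p ≤ q) (hg : 0 ≤ g) :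
    doublePhase p q b (g ^ (1 / p)) = (1 + b * (g ^ (1 / p)) ^ (q - p)) * g := by
  have hgp : (g ^ (1 / p)) ^ p = g := by rw [one_div, Real.rpow_inv_rpow hg hp.ne']
  have hgq : (g ^ (1 / p)) ^ q = (g ^ (1 / p)) ^ (q - p) * g := by
    nth_rw 3 [← hgp]
    rw [← Real.rpow_add_of_nonneg (by positivity) (sub_nonneg.2 hpq) hp.le, sub_add_cancel]
  rw [doublePhase, hgp, hgq]
  ring

end DoublePhase

section TranslationInvariance

variable {G M : Type*} [AddGroup G] [MeasurableSpace G] [MeasurableAdd G] {μ : Measure G}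
  [μ.IsAddRightInvariant] [NormedAddCommGroup M] {s t : Set G} {v : G}

lemma integrableOn_comp_add_right {g : G → M} (hg : IntegrableOn g t μ)
    (hst : MapsTo (· + v) s t) : IntegrableOn (fun x => g (x + v)) s μ :=
  (((measurePreserving_add_right μ v).integrableOn_comp_preimage
    (measurableEmbedding_addRight v)).2 hg).mono_set hst

lemma setIntegral_preimage_add_right [NormedSpace ℝ M] (g : G → M) (t : Set G) (v : G) :
    ∫ x in (· + v) ⁻¹' t, g (x + v) ∂μ = ∫ x in t, g x ∂μ :=
  (measurePreserving_add_right μ v).setIntegral_preimage_emb (measurableEmbedding_addRight v) g t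

lemma setIntegral_comp_add_right_le {g : G → ℝ} (hg0 : ∀ x, 0 ≤ g x) (hg : IntegrableOn g t μ)
    (hst : MapsTo (· + v) s t) : ∫ x in s, g (x + v) ∂μ ≤ ∫ x in t, g x ∂μ := by
  rw [← setIntegral_preimage_add_right g t v]
  exact setIntegral_mono_set (integrableOn_comp_add_right hg (mapsTo_preimage _ t))
    (ae_of_all _ fun x => hg0 (x + v)) (LE.le.eventuallyLE hst)

end TranslationInvariance

section BoundedSets

variable {X F : Type*} [MetricSpace X] [ProperSpace X] [MeasurableSpace X]
  [OpensMeasurableSpace X] {μ : Measure X} [IsFiniteMeasureOnCompacts μ] {s : Set X}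

lemma integrableOn_of_isBounded [NormedAddCommGroup F] {f : X → F} (hf : Continuous f)
    (hs : Bornology.IsBounded s) : IntegrableOn f s μ :=
  (hf.continuousOn.integrableOn_compact hs.isCompact_closure).mono_set subset_closure

lemma doublePhase_setAverage_le {p q b : ℝ} {f : X → ℝ} (hf : Continuous f) (hf0 : ∀ x, 0 ≤ f x)
    (hp : 1 ≤ p) (hq : 1 ≤ q) (hb : 0 ≤ b) (hs0 : μ s ≠ 0) (hs : Bornology.IsBounded s) :
    doublePhase p q b (⨍ x in s, f x ∂μ) ≤ ⨍ x in s, doublePhase p q b (f x) ∂μ := by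
  have hcont : Continuous (doublePhase p q b) :=
    continuous_doublePhase (zero_le_one.trans hp) (zero_le_one.trans hq)
  exact (convexOn_doublePhase hp hq hb).map_set_average_le hcont.continuousOn isClosed_Ici hs0
    hs.measure_lt_top.ne (ae_of_all _ hf0) (integrableOn_of_isBounded hf hs)
    (integrableOn_of_isBounded (hcont.comp hf) hs)

end BoundedSets

section Lipschitz

variable {E F : Type*} [NormedAddCommGroup E] [NormedSpace ℝ E] [MeasurableSpace E]
  [BorelSpace E] {μ : Measure E} [NormedAddCommGroup F] [NormedSpace ℝ F]
  [FiniteDimensional ℝ F] {u : E → F} {K : NNReal}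

lemma integrableOn_rpow_mul_norm_fderiv {s : Set E} {r p : ℝ} (hu : LipschitzWith K u)
    (hr : 0 ≤ r) (hp : 0 ≤ p) (hs : μ s ≠ ⊤) :
    IntegrableOn (fun x => (r * ‖fderiv ℝ u x‖) ^ p) s μ := by
  have := FiniteDimensional.complete ℝ F
  have hmeas : Measurable fun x => (r * ‖fderiv ℝ u x‖) ^ p :=
    ((measurable_fderiv ℝ u).norm.const_mul r).pow_const p
  refine Measure.integrableOn_of_bounded (M := (r * K) ^ p) hs hmeas.aestronglyMeasurable
    (ae_of_all _ fun x => ?_)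
  rw [Real.norm_of_nonneg (by positivity)]
  gcongr
  exact norm_fderiv_le_of_lipschitz ℝ hu

variable [FiniteDimensional ℝ E] [μ.IsAddHaarMeasure]

lemma hasDerivAt_setIntegral_comp_add_smul {s : Set E} (hu : LipschitzWith K u)
    (hs : Bornology.IsBounded s) (v : E) (τ : ℝ) :
    HasDerivAt (fun τ : ℝ => ∫ x in s, u (x + τ • v) ∂μ)
      (∫ x in s, fderiv ℝ u (x + τ • v) v ∂μ) τ := by
  have := FiniteDimensional.complete ℝ F
  have := FiniteDimensional.proper_real F
  borelize F
  have := FiniteDimensional.proper_real E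
  have hcont (σ : ℝ) : Continuous fun x => u (x + σ • v) :=
    hu.continuous.comp (continuous_add_const _)
  have hlip (x : E) : LipschitzWith (K * ‖v‖₊) fun σ : ℝ => u (x + σ • v) :=
    LipschitzWith.of_dist_le_mul fun σ σ' => by
      calc dist (u (x + σ • v)) (u (x + σ' • v)) ≤ K * dist (x + σ • v) (x + σ' • v) :=
            hu.dist_le_mul _ _
        _ = ↑(K * ‖v‖₊) * dist σ σ' := by
            rw [dist_add_left, dist_eq_norm, ← sub_smul, norm_smul, dist_eq_norm]
            push_cast
            ring
  have hdiff : ∀ᵐ x ∂μ, HasDerivAt (fun σ : ℝ => u (x + σ • v)) (fderiv ℝ u (x + τ • v) v) τ := by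
    have hline (x : E) : HasDerivAt (fun σ : ℝ => x + σ • v) v τ := by
      simpa using ((hasDerivAt_id τ).smul_const v).const_add x
    filter_upwards [(measurePreserving_add_right μ (τ • v)).quasiMeasurePreserving.ae
      hu.ae_differentiableAt] with x hx
    exact hx.hasFDerivAt.comp_hasDerivAt τ (hline x)
  refine (hasDerivAt_integral_of_dominated_loc_of_lip (bound := fun _ => K * ‖v‖) Filter.univ_mem
    (Filter.Eventually.of_forall fun σ => (hcont σ).aestronglyMeasurable)
    (integrableOn_of_isBounded (hcont τ) hs)
    ((measurable_fderiv_apply_const ℝ u v).comp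
      (measurable_add_const (τ • v))).aestronglyMeasurable
    (ae_of_all _ fun x => ?_) (integrableOn_const hs.measure_lt_top.ne)
    (ae_restrict_of_ae hdiff)).2
  simpa using (hlip x).lipschitzOnWith (s := univ)

lemma norm_setIntegral_comp_add_sub_le {s t : Set E} {v : E} (hu : LipschitzWith K u)
    (hs : Bornology.IsBounded s) (ht : μ t ≠ ⊤)
    (hst : ∀ τ ∈ Icc (0 : ℝ) 1, MapsTo (· + τ • v) s t) :
    ‖(∫ x in s, u (x + v) ∂μ) - ∫ x in s, u x ∂μ‖ ≤ ‖v‖ * ∫ x in t, ‖fderiv ℝ u x‖ ∂μ := by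
  have hint : IntegrableOn (fun x => ‖fderiv ℝ u x‖) t μ := by
    simpa using integrableOn_rpow_mul_norm_fderiv hu zero_le_one zero_le_one ht
  have hbound (τ : ℝ) (hτ : τ ∈ Ico (0 : ℝ) 1) :
      ‖∫ x in s, fderiv ℝ u (x + τ • v) v ∂μ‖ ≤ ‖v‖ * ∫ x in t, ‖fderiv ℝ u x‖ ∂μ := by
    have hmaps := hst τ (Ico_subset_Icc_self hτ)
    calc ‖∫ x in s, fderiv ℝ u (x + τ • v) v ∂μ‖
        ≤ ∫ x in s, ‖v‖ * ‖fderiv ℝ u (x + τ • v)‖ ∂μ :=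
          norm_integral_le_of_norm_le ((integrableOn_comp_add_right hint hmaps).const_mul ‖v‖)
            (ae_of_all _ fun x => ((fderiv ℝ u _).le_opNorm v).trans_eq (mul_comm _ _))
      _ = ‖v‖ * ∫ x in s, ‖fderiv ℝ u (x + τ • v)‖ ∂μ := integral_const_mul _ _
      _ ≤ ‖v‖ * ∫ x in t, ‖fderiv ℝ u x‖ ∂μ := by
          gcongr
          exact setIntegral_comp_add_right_le (fun _ => norm_nonneg _) hint hmaps
  simpa using norm_image_sub_le_of_norm_deriv_le_segment_01'
    (fun τ _ => (hasDerivAt_setIntegral_comp_add_smul (μ := μ) hu hs v τ).hasDerivWithinAt) hbound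

end Lipschitz

section Average

variable {X F : Type*} [MeasurableSpace X] {μ : Measure X} {s : Set X}

lemma setAverage_nonneg {f : X → ℝ} (hf : ∀ x, 0 ≤ f x) : 0 ≤ ⨍ x in s, f x ∂μ :=
  integral_nonneg hf

lemma norm_setAverage_le [NormedAddCommGroup F] [NormedSpace ℝ F] (f : X → F) :
    ‖⨍ x in s, f x ∂μ‖ ≤ ⨍ x in s, ‖f x‖ ∂μ :=
  norm_integral_le_integral_norm f

end Average

section GradMean

variable {E F : Type*} [NormedAddCommGroup E] [NormedSpace ℝ E] [MeasurableSpace E]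
  [NormedAddCommGroup F] [NormedSpace ℝ F]

/-- The `L^p` mean `(⨍_s |r ∇u|^p)^{1/p}` of the gradient at scale `r`, which is the argument at
which the paper's right-hand sides evaluate the double-phase integrand. -/
def gradMean (μ : Measure E) (p r : ℝ) (u : E → F) (s : Set E) : ℝ :=
  (⨍ x in s, (r * ‖fderiv ℝ u x‖) ^ p ∂μ) ^ (1 / p)

variable {μ : Measure E} {u : E → F} {p q b r : ℝ} {s : Set E}

lemma gradMean_nonneg (hr : 0 ≤ r) : 0 ≤ gradMean μ p r u s :=
  Real.rpow_nonneg (setAverage_nonneg fun _ => by positivity) _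

lemma doublePhase_gradMean (hp : 0 < p) (hpq : p ≤ q) (hr : 0 ≤ r) :
    doublePhase p q b (gradMean μ p r u s) =
      (1 + b * ((⨍ x in s, (r * ‖fderiv ℝ u x‖) ^ p ∂μ) ^ (1 / p)) ^ (q - p)) *
        ⨍ x in s, (r * ‖fderiv ℝ u x‖) ^ p ∂μ :=
  doublePhase_rpow_one_div hp hpq (setAverage_nonneg fun _ => by positivity)

lemma setAverage_le_gradMean [BorelSpace E] [FiniteDimensional ℝ F] {K : NNReal}
    (hu : LipschitzWith K u) (hp : 1 ≤ p) (hr : 0 ≤ r) (hs0 : μ s ≠ 0) (hs : μ s ≠ ⊤) :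
    ⨍ x in s, r * ‖fderiv ℝ u x‖ ∂μ ≤ gradMean μ p r u s := by
  have hp0 : 0 < p := zero_lt_one.trans_le hp
  have hjensen : (⨍ x in s, r * ‖fderiv ℝ u x‖ ∂μ) ^ p ≤
      ⨍ x in s, (r * ‖fderiv ℝ u x‖) ^ p ∂μ :=
    (convexOn_rpow hp).map_set_average_le (Real.continuous_rpow_const hp0.le).continuousOn
      isClosed_Ici hs0 hs (ae_of_all _ fun x => mem_Ici.2 (by positivity))
      (by simpa using integrableOn_rpow_mul_norm_fderiv hu hr zero_le_one hs)
      (integrableOn_rpow_mul_norm_fderiv hu hr hp0.le hs)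
  rw [gradMean, one_div]
  exact (Real.le_rpow_inv_iff_of_pos (setAverage_nonneg fun _ => by positivity)
    (setAverage_nonneg fun _ => by positivity) hp0).2 hjensen

end GradMean

lemma exists_mem_frontier_dist_eq {X : Type*} [PseudoMetricSpace X] [ProperSpace X] {Ω : Set X}
    {z : X} (h : 0 < infDist z (frontier Ω)) :
    ∃ w ∈ frontier Ω, dist z w = infDist z (frontier Ω) := by
  have hne : (frontier Ω).Nonempty := by
    by_contra hempty
    rw [not_nonempty_iff_eq_empty.1 hempty, infDist_empty] at h
    exact h.false
  obtain ⟨w, hw, hzw⟩ := isClosed_frontier.exists_infDist_eq_dist hne z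
  exact ⟨w, hw, hzw.symm⟩

section MeanValue

variable {E F : Type*} [NormedAddCommGroup E] [NormedSpace ℝ E] [FiniteDimensional ℝ E]
  [MeasurableSpace E] [BorelSpace E] {μ : Measure E} [μ.IsAddHaarMeasure]

lemma inv_measureReal_ball_mul_setIntegral_ball_mul (f : E → ℝ) (w z : E) {k r : ℝ} (hk : 0 < k) :
    (μ.real (ball w r))⁻¹ * ∫ x in ball z (k * r), f x ∂μ =
      k ^ Module.finrank ℝ E * ⨍ x in ball z (k * r), f x ∂μ := by
  have hvol : μ.real (ball z (k * r)) = k ^ Module.finrank ℝ E * μ.real (ball w r) := by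
    rw [measureReal_def, Measure.addHaar_ball_mul_of_pos μ z hk, ENNReal.toReal_mul,
      ENNReal.toReal_ofReal (by positivity), ← measureReal_def,
      ← Measure.addHaar_real_ball_center μ w]
  rw [setAverage_eq, hvol, smul_eq_mul, mul_inv, mul_assoc, mul_inv_cancel_left₀ (by positivity)]

lemma setAverage_ball_le_pow_mul {f : E → ℝ} {w z : E} {k r : ℝ} (hf0 : ∀ x, 0 ≤ f x)
    (hk : 0 < k) (hsub : ball w r ⊆ ball z (k * r)) (hf : IntegrableOn f (ball z (k * r)) μ) :
    ⨍ x in ball w r, f x ∂μ ≤ k ^ Module.finrank ℝ E * ⨍ x in ball z (k * r), f x ∂μ := by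
  rw [← inv_measureReal_ball_mul_setIntegral_ball_mul f w z hk, setAverage_eq, smul_eq_mul]
  gcongr
  exact ae_of_all _ hf0

variable [NormedAddCommGroup F] [NormedSpace ℝ F] [FiniteDimensional ℝ F] {u : E → F} {K : NNReal}
  {p q b r : ℝ} {w z : E}

lemma gradMean_ball_le (hu : LipschitzWith K u) (hp : 1 ≤ p) (hr : 0 ≤ r)
    (hsub : ball w r ⊆ ball z (2 * r)) :
    gradMean μ p r u (ball w r) ≤
      2 ^ Module.finrank ℝ E * gradMean μ p r u (ball z (2 * r)) := by
  have hp0 : 0 < p := zero_lt_one.trans_le hp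
  have := FiniteDimensional.proper_real E
  have hnonneg (t : Set E) : 0 ≤ ⨍ x in t, (r * ‖fderiv ℝ u x‖) ^ p ∂μ :=
    setAverage_nonneg fun _ => by positivity
  calc gradMean μ p r u (ball w r)
      ≤ (2 ^ Module.finrank ℝ E * ⨍ x in ball z (2 * r), (r * ‖fderiv ℝ u x‖) ^ p ∂μ) ^ (1 / p) :=
        Real.rpow_le_rpow (hnonneg _) (setAverage_ball_le_pow_mul (fun _ => by positivity) two_pos
          hsub (integrableOn_rpow_mul_norm_fderiv hu hr hp0.le measure_ball_lt_top.ne))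
          (by positivity)
    _ = (2 ^ Module.finrank ℝ E) ^ (1 / p) * gradMean μ p r u (ball z (2 * r)) :=
        Real.mul_rpow (by positivity) (hnonneg _)
    _ ≤ 2 ^ Module.finrank ℝ E * gradMean μ p r u (ball z (2 * r)) := by
        refine mul_le_mul_of_nonneg_right ?_ (gradMean_nonneg hr)
        exact Real.rpow_le_self_of_one_le (one_le_pow₀ one_le_two) ((div_le_one hp0).2 hp)

lemma norm_setAverage_ball_sub_le (hu : LipschitzWith K u) (hr : 0 < r) (hzw : dist z w ≤ r) :
    ‖(⨍ x in ball z r, u x ∂μ) - ⨍ x in ball w r, u x ∂μ‖ ≤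
      2 ^ Module.finrank ℝ E * ⨍ x in ball z (2 * r), r * ‖fderiv ℝ u x‖ ∂μ := by
  have := FiniteDimensional.proper_real E
  have hmaps (τ : ℝ) (hτ : τ ∈ Icc (0 : ℝ) 1) :
      MapsTo (· + τ • (z - w)) (ball w r) (ball z (2 * r)) := by
    intro x hx
    have hcomb : x + τ • (z - w) - z = (x - w) - (1 - τ) • (z - w) := by module
    rw [mem_ball, dist_eq_norm] at hx ⊢
    rw [dist_eq_norm] at hzw
    calc ‖x + τ • (z - w) - z‖ ≤ ‖x - w‖ + (1 - τ) * ‖z - w‖ := by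
          rw [hcomb, ← norm_smul_of_nonneg (sub_nonneg.2 hτ.2)]
          exact norm_sub_le _ _
      _ < 2 * r := by nlinarith [hτ.1, hτ.2, norm_nonneg (z - w)]
  have htranslate : ∫ x in ball w r, u (x + (z - w)) ∂μ = ∫ x in ball z r, u x ∂μ := by
    rw [← setIntegral_preimage_add_right u (ball z r) (z - w), preimage_add_right_ball,
      sub_sub_cancel]
  rw [← inv_measureReal_ball_mul_setIntegral_ball_mul _ w z two_pos, setAverage_eq, setAverage_eq,
    Measure.addHaar_real_ball_center μ z, ← Measure.addHaar_real_ball_center μ w, ← smul_sub,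
    norm_smul, Real.norm_of_nonneg (by positivity), ← htranslate]
  gcongr
  calc ‖(∫ x in ball w r, u (x + (z - w)) ∂μ) - ∫ x in ball w r, u x ∂μ‖
      ≤ ‖z - w‖ * ∫ x in ball z (2 * r), ‖fderiv ℝ u x‖ ∂μ :=
        norm_setIntegral_comp_add_sub_le hu isBounded_ball measure_ball_lt_top.ne hmaps
    _ ≤ r * ∫ x in ball z (2 * r), ‖fderiv ℝ u x‖ ∂μ := by
        rw [← dist_eq_norm]
        exact mul_le_mul_of_nonneg_right hzw (integral_nonneg fun _ => norm_nonneg _)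
    _ = ∫ x in ball z (2 * r), r * ‖fderiv ℝ u x‖ ∂μ := (integral_const_mul _ _).symm

lemma norm_setAverage_ball_le_add (hu : LipschitzWith K u) (hp : 1 ≤ p) (hr : 0 < r)
    (hzw : dist z w ≤ r) :
    ‖⨍ x in ball z r, u x ∂μ‖ ≤ (⨍ x in ball w r, ‖u x‖ ∂μ) +
      2 ^ Module.finrank ℝ E * gradMean μ p r u (ball z (2 * r)) := by
  have := FiniteDimensional.proper_real E
  have hjensen : ⨍ x in ball z (2 * r), r * ‖fderiv ℝ u x‖ ∂μ ≤
      gradMean μ p r u (ball z (2 * r)) :=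
    setAverage_le_gradMean hu hp hr.le (measure_ball_pos μ z (by positivity)).ne'
      measure_ball_lt_top.ne
  calc ‖⨍ x in ball z r, u x ∂μ‖
      ≤ ‖⨍ x in ball w r, u x ∂μ‖ + ‖(⨍ x in ball z r, u x ∂μ) - ⨍ x in ball w r, u x ∂μ‖ :=
        norm_le_norm_add_norm_sub' _ _
    _ ≤ _ := add_le_add (norm_setAverage_le u) ((norm_setAverage_ball_sub_le hu hr hzw).trans
        (mul_le_mul_of_nonneg_left hjensen (by positivity)))

lemma doublePhase_norm_setAverage_ball_le {c : ℝ} (hu : LipschitzWith K u) (hp : 1 ≤ p)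
    (hpq : p ≤ q) (hb : 0 ≤ b) (hc : 0 ≤ c) (hr : 0 < r) (hzw : dist z w ≤ r)
    (hw : ⨍ x in ball w r, doublePhase p q b ‖u x‖ ∂μ ≤
      c * doublePhase p q b (gradMean μ p r u (ball w r))) :
    doublePhase p q b ‖⨍ x in ball z r, u x ∂μ‖ ≤
      2 ^ (q - 1) * (c + 1) * (2 ^ Module.finrank ℝ E) ^ q *
        doublePhase p q b (gradMean μ p r u (ball z (2 * r))) := by
  have := FiniteDimensional.proper_real E
  have hq : 1 ≤ q := hp.trans hpq
  have hmono : MonotoneOn (doublePhase p q b) (Ici 0) :=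
    monotoneOn_doublePhase (zero_le_one.trans hp) (zero_le_one.trans hq) hb
  set d : ℝ := 2 ^ Module.finrank ℝ E
  set N := gradMean μ p r u (ball z (2 * r))
  set S := ⨍ x in ball w r, ‖u x‖ ∂μ
  have hN : 0 ≤ N := gradMean_nonneg hr.le
  have hS : 0 ≤ S := setAverage_nonneg fun _ => norm_nonneg _
  have hboundary : doublePhase p q b S ≤ c * doublePhase p q b (d * N) := by
    have hsub : ball w r ⊆ ball z (2 * r) :=
      ball_subset_ball' (by rw [dist_comm w z]; linarith)
    calc doublePhase p q b S ≤ ⨍ x in ball w r, doublePhase p q b ‖u x‖ ∂μ :=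
          doublePhase_setAverage_le hu.continuous.norm (fun _ => norm_nonneg _) hp hq hb
            (measure_ball_pos μ w hr).ne' isBounded_ball
      _ ≤ c * doublePhase p q b (gradMean μ p r u (ball w r)) := hw
      _ ≤ c * doublePhase p q b (d * N) := by
          refine mul_le_mul_of_nonneg_left ?_ hc
          exact hmono (gradMean_nonneg hr.le) (by positivity : 0 ≤ d * N)
            (gradMean_ball_le hu hp hr.le hsub)
  calc doublePhase p q b ‖⨍ x in ball z r, u x ∂μ‖ ≤ doublePhase p q b (S + d * N) :=
        hmono (norm_nonneg _) (by positivity : 0 ≤ S + d * N)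
          (norm_setAverage_ball_le_add hu hp hr hzw)
    _ ≤ 2 ^ (q - 1) * (doublePhase p q b S + doublePhase p q b (d * N)) :=
        doublePhase_add_le hp hpq hb hS (by positivity)
    _ ≤ 2 ^ (q - 1) * (c * doublePhase p q b (d * N) + doublePhase p q b (d * N)) := by gcongr
    _ = 2 ^ (q - 1) * (c + 1) * doublePhase p q b (d * N) := by ring
    _ ≤ 2 ^ (q - 1) * (c + 1) * (d ^ q * doublePhase p q b N) := by
        gcongr
        exact doublePhase_mul_le hpq (one_le_pow₀ one_le_two) hN
    _ = 2 ^ (q - 1) * (c + 1) * d ^ q * doublePhase p q b N := by ring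

theorem mean_value_poincare_of_boundary_poincare_general {c0 ro : ℝ} {Ω : Set E}
    (hp : 1 ≤ p) (hpq : p ≤ q) (hb : 0 ≤ b) (hc0 : 0 ≤ c0) (hΩ : IsOpen Ω)
    (hu : LipschitzWith K u)
    (hbdry : ∀ w ∈ Ωᶜ, ∀ ρ, 0 < ρ → ρ < ro →
      ⨍ x in ball w ρ, (‖u x‖ ^ p + b * ‖u x‖ ^ q) ∂μ ≤
        c0 * (1 + b * ((⨍ x in ball w ρ, (ρ * ‖fderiv ℝ u x‖) ^ p ∂μ) ^ (1 / p)) ^ (q - p)) *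
          ⨍ x in ball w ρ, (ρ * ‖fderiv ℝ u x‖) ^ p ∂μ)
    (hr : r = infDist z (frontier Ω)) (hro : r < ro) :
    ‖⨍ x in ball z r, u x ∂μ‖ ^ p + b * ‖⨍ x in ball z r, u x ∂μ‖ ^ q ≤
      2 ^ (q - 1) * (c0 + 1) * (2 ^ Module.finrank ℝ E) ^ q *
        (1 + b * ((⨍ x in ball z (2 * r), (r * ‖fderiv ℝ u x‖) ^ p ∂μ) ^ (1 / p)) ^ (q - p)) *
          ⨍ x in ball z (2 * r), (r * ‖fderiv ℝ u x‖) ^ p ∂μ := by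
  have hp0 : 0 < p := zero_lt_one.trans_le hp
  rcases (hr ▸ infDist_nonneg : 0 ≤ r).eq_or_lt with rfl | hr0
  · simp [Real.zero_rpow hp0.ne', Real.zero_rpow (hp0.trans_le hpq).ne']
  have := FiniteDimensional.proper_real E
  obtain ⟨w, hw, hzw⟩ := exists_mem_frontier_dist_eq (hr ▸ hr0)
  have hwΩ : w ∈ Ωᶜ := (hΩ.frontier_eq ▸ hw).2
  have hball : ⨍ x in ball w r, doublePhase p q b ‖u x‖ ∂μ ≤
      c0 * doublePhase p q b (gradMean μ p r u (ball w r)) := by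
    rw [doublePhase_gradMean hp0 hpq hr0.le, ← mul_assoc]
    exact hbdry w hwΩ r hr0 hro
  have hmean :=
    doublePhase_norm_setAverage_ball_le hu hp hpq hb hc0 hr0 (hzw.trans hr.symm).le hball
  rwa [doublePhase_gradMean hp0 hpq hr0.le, ← mul_assoc] at hmean

end MeanValue

section Coefficient

variable {n : ℕ} {a : En n → ℝ}

lemma aSupOn_nonneg (ha : ∀ x, 0 ≤ a x) (O : Set (En n)) : 0 ≤ aSupOn a O :=
  Real.sSup_nonneg (forall_mem_image.2 fun x _ => ha x)

lemma aInfOn_nonneg (ha : ∀ x, 0 ≤ a x) (O : Set (En n)) : 0 ≤ aInfOn a O :=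
  Real.sInf_nonneg (forall_mem_image.2 fun x _ => ha x)

end Coefficient

/-- **From the boundary Poincaré inequality to the mean-value Poincaré inequality**
(Theorem 1.9, (3) ⇒ (4) labelling of the paper: here (2) ⇒ (3)). -/
theorem mean_value_poincare_of_boundary_poincare
    (n : ℕ) (hn : 0 < n) (p q c0 : ℝ)
    (hp : 1 < p) (hpq : p < q) (hc0 : 0 < c0) :
    ∃ c : ℝ, 0 < c ∧
      ∀ (α A ro : ℝ) (a : En n → ℝ) (Ω : Set (En n)) (astar : En n → ℝ → ℝ),
        0 < α → α ≤ 1 → (∀ x, 0 ≤ a x) → 0 ≤ A →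
        (∀ x y, |a x - a y| ≤ A * dist x y ^ α) →
        q / p ≤ 1 + α / n →
        IsOpen Ω → 0 < ro → ro ≤ 1 →
        ((∀ y R, astar y R = aSupOn a (ball y R)) ∨
         (∀ y R, astar y R = aInfOn a (ball y R))) →
        (∀ z ∈ Ωᶜ, ∀ (y : En n) (r R : ℝ), 0 < r → r < ro → 0 < R →
          ∀ u ∈ Lip0 Ω,
            (⨍ x in ball z r, (|u x| ^ p + astar y R * |u x| ^ q)) ≤
              c0 * (1 + astar y R *
                    ((⨍ x in ball z r, (r * gnorm u x) ^ p) ^ (1 / p)) ^ (q - p)) *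
                (⨍ x in ball z r, (r * gnorm u x) ^ p)) →
        ∀ z ∈ Ω, ∀ rz : ℝ, rz = infDist z (frontier Ω) → rz < ro →
          ∀ (y : En n) (R : ℝ), 0 < R → ∀ u ∈ Lip0 Ω,
            |⨍ x in ball z rz, u x| ^ p + astar y R * |⨍ x in ball z rz, u x| ^ q ≤
              c * (1 + astar y R *
                    ((⨍ x in ball z (2 * rz), (rz * gnorm u x) ^ p) ^ (1 / p)) ^ (q - p)) *
                (⨍ x in ball z (2 * rz), (rz * gnorm u x) ^ p) := by
  refine ⟨2 ^ (q - 1) * (c0 + 1) * (2 ^ Module.finrank ℝ (En n)) ^ q, by positivity, ?_⟩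
  intro α A ro a Ω astar _ _ ha _ _ _ hΩ _ _ hastar hbdry z _ rz hrz hro y R hR u hu
  have hb : 0 ≤ astar y R := by
    rcases hastar with h | h <;> rw [h]
    exacts [aSupOn_nonneg ha _, aInfOn_nonneg ha _]
  obtain ⟨K, hK⟩ := hu.1
  exact mean_value_poincare_of_boundary_poincare_general hp.le hpq.le hb hc0.le hΩ hK
    (fun w hw r hr hrro => hbdry w hw y r R hr hrro hR u hu) hrz hro
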